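/- (Theorem 1, missing-data and propensity-score models correct.) Fix d in {(1,1),(0,1),(1,0)} and d' = (0,0). Suppose Assumption DID holds for d and for d', Assumption MAR holds, P(D = d | X) > 0 and P(D = d' | X) > 0 a.s., all four Hájek-weight denominators are finite and strictly positive, and all expectations defining τ^R_{dd'} are finite. If, a.s., φ_{d2}(X) = q_{d2}(X) and φ_0(X) = q_0(X), and π_{d1|d2}(X) = p_{d1|d2}(X), π_{d2}(X) = p_{d2}(X), π_{0|0}(X) = p_{0|0}(X), π_0(X) = p_0(X) (so that π_d = p_d and π_{d'} = p_{d'}), while μ_d and μ_{d'} are arbitrary measurable functions of X with μ_d(X), μ_{d'}(X) integrable, then τ^R_{dd'} = τ_{dd'}. -/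

import Mathlib

open MeasureTheory Set
open scoped Classical

noncomputable section

namespace DIDMissing

variable {Ω : Type*} {𝓧 : Type*}

/-- Real-valued indicator of a set. -/
def ind (A : Set Ω) : Ω → ℝ := A.indicator fun _ => (1 : ℝ)

/-- All treatment paths `{0,1}²` (coded as reals). -/
def allPaths : Set (ℝ × ℝ) := {(0, 0), (0, 1), (1, 0), (1, 1)}

/-- The three treated paths `{(1,1), (0,1), (1,0)}`. -/
def threePaths : Set (ℝ × ℝ) := {(1, 1), (0, 1), (1, 0)}

/-- The event `{D = d}` for a treatment path `d = (d₁, d₂)`. -/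
def evD (D1 D2 : Ω → ℝ) (d : ℝ × ℝ) : Set Ω := {ω | D1 ω = d.1 ∧ D2 ω = d.2}

/-- The event `{D₂ = b}`. -/
def evD2 (D2 : Ω → ℝ) (b : ℝ) : Set Ω := {ω | D2 ω = b}

/-- `g` is a (measurable-in-the-covariate) version of the conditional mean `E[Z ∣ A, X]`:
for every bounded measurable `h`, `E[1_A · Z · h(X)] = E[1_A · g(X) · h(X)]`. -/
def IsCondMeanGiven [MeasurableSpace Ω] [MeasurableSpace 𝓧] (P : Measure Ω) (X : Ω → 𝓧)
    (A : Set Ω) (Z : Ω → ℝ) (g : 𝓧 → ℝ) : Prop :=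
  Measurable g ∧
    ∀ h : 𝓧 → ℝ, Measurable h → (∃ C, ∀ x, |h x| ≤ C) →
      ∫ ω, ind A ω * Z ω * h (X ω) ∂P = ∫ ω, ind A ω * g (X ω) * h (X ω) ∂P

/-- Assumption DID for a path `d` relative to `d' = (0,0)`:
(i) no anticipation, `E[Y₀(d) ∣ D = d, X] = E[Y₀(0,0) ∣ D = d, X]` a.s., stated in the
version-free integral form; and (ii) conditional parallel trends, stated as the existence
of a common version of `E[Y₂(0,0) − Y₀(0,0) ∣ X]` and `E[Y₂(0,0) − Y₀(0,0) ∣ D = d, X]`. -/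
def DID [MeasurableSpace Ω] [MeasurableSpace 𝓧] (P : Measure Ω) (X : Ω → 𝓧)
    (D1 D2 : Ω → ℝ) (Y0p Y2p : ℝ × ℝ → Ω → ℝ) (d : ℝ × ℝ) : Prop :=
  (∀ h : 𝓧 → ℝ, Measurable h → (∃ C, ∀ x, |h x| ≤ C) →
      ∫ ω, ind (evD D1 D2 d) ω * Y0p d ω * h (X ω) ∂P
        = ∫ ω, ind (evD D1 D2 d) ω * Y0p (0, 0) ω * h (X ω) ∂P) ∧
  (∃ tr : 𝓧 → ℝ,
      IsCondMeanGiven P X Set.univ (fun ω => Y2p (0, 0) ω - Y0p (0, 0) ω) tr ∧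
      IsCondMeanGiven P X (evD D1 D2 d) (fun ω => Y2p (0, 0) ω - Y0p (0, 0) ω) tr)

/-- Assumption MAR: `S ⟂ (D₁, ΔY) ∣ (D₂, X)`, where `q d₂` is a version of the
missing-data probability `P(S = 1 ∣ D₂ = d₂, X)`, which is `(0,1]`-valued a.s. -/
def MAR [MeasurableSpace Ω] [MeasurableSpace 𝓧] (P : Measure Ω) (X : Ω → 𝓧)
    (D1 D2 S Y0 Y2 : Ω → ℝ) (q : ℝ → 𝓧 → ℝ) : Prop :=
  (∀ d2 ∈ ({0, 1} : Set ℝ), IsCondMeanGiven P X (evD2 D2 d2) S (q d2)) ∧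
  (∀ d2 ∈ ({0, 1} : Set ℝ), ∀ᵐ ω ∂P, 0 < q d2 (X ω) ∧ q d2 (X ω) ≤ 1) ∧
  (∀ d2 ∈ ({0, 1} : Set ℝ), ∀ f : ℝ × ℝ → ℝ, Measurable f → (∃ C, ∀ p, |f p| ≤ C) →
      ∀ h : 𝓧 → ℝ, Measurable h → (∃ C, ∀ x, |h x| ≤ C) →
        ∫ ω, ind (evD2 D2 d2) ω * S ω * f (D1 ω, Y2 ω - Y0 ω) * h (X ω) ∂P
          = ∫ ω, ind (evD2 D2 d2) ω * q d2 (X ω) * f (D1 ω, Y2 ω - Y0 ω) * h (X ω) ∂P)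

/-- The path-dependent ATT `τ_{d,(0,0)} = E[Y₂(d) − Y₂(0,0) ∣ D = d]`. -/
def tau [MeasurableSpace Ω] (P : Measure Ω) (D1 D2 : Ω → ℝ)
    (Y2p : ℝ × ℝ → Ω → ℝ) (d : ℝ × ℝ) : ℝ :=
  (P (evD D1 D2 d)).toReal⁻¹ * ∫ ω in evD D1 D2 d, (Y2p d ω - Y2p (0, 0) ω) ∂P

/-- Numerator of the Hájek weight `w₁`. -/
def n1 (X : Ω → 𝓧) (D1 D2 S : Ω → ℝ) (φ2 : 𝓧 → ℝ) (d : ℝ × ℝ) : Ω → ℝ :=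
  fun ω => S ω / φ2 (X ω) * ind (evD D1 D2 d) ω

/-- Numerator of the Hájek weight `w₂`. -/
def n2 (X : Ω → 𝓧) (D1 D2 S : Ω → ℝ) (φ0 πc πc' π2 π0 : 𝓧 → ℝ) : Ω → ℝ :=
  fun ω => S ω / φ0 (X ω) * (πc (X ω) * π2 (X ω) / (πc' (X ω) * π0 (X ω)))
    * ind (evD D1 D2 (0, 0)) ω

/-- Numerator of the Hájek weight `w₃`. -/
def n3 (X : Ω → 𝓧) (D2 : Ω → ℝ) (πc : 𝓧 → ℝ) (d2 : ℝ) : Ω → ℝ :=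
  fun ω => πc (X ω) * ind (evD2 D2 d2) ω

/-- Numerator of the Hájek weight `w₄`. -/
def n4 (X : Ω → 𝓧) (D2 S : Ω → ℝ) (φ2 πc : 𝓧 → ℝ) (d2 : ℝ) : Ω → ℝ :=
  fun ω => S ω / φ2 (X ω) * πc (X ω) * ind (evD2 D2 d2) ω

/-- The robust estimand `τ^R_{d,(0,0)}`. -/
def tauR [MeasurableSpace Ω] (P : Measure Ω) (X : Ω → 𝓧) (D1 D2 S Y0 Y2 : Ω → ℝ)
    (d : ℝ × ℝ) (μd μd' πc πc' π2 π0 φ2 φ0 : 𝓧 → ℝ) : ℝ :=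
  (∫ ω, (n1 X D1 D2 S φ2 d ω / ∫ ω', n1 X D1 D2 S φ2 d ω' ∂P
        - n2 X D1 D2 S φ0 πc πc' π2 π0 ω / ∫ ω', n2 X D1 D2 S φ0 πc πc' π2 π0 ω' ∂P)
      * (Y2 ω - Y0 ω - μd' (X ω)) ∂P)
  + ∫ ω, (n3 X D2 πc d.2 ω / ∫ ω', n3 X D2 πc d.2 ω' ∂P
        - n4 X D2 S φ2 πc d.2 ω / ∫ ω', n4 X D2 S φ2 πc d.2 ω' ∂P)
      * (μd (X ω) - μd' (X ω)) ∂P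

def Same {Ω E : Type*} [MeasurableSpace Ω] [MeasurableSpace E] (P : Measure Ω) (W : Ω → E)
    (a b : Ω → ℝ) : Prop :=
  ∀ F : E → ℝ, Measurable F → (Integrable (fun ω => a ω * F (W ω)) P ↔
    Integrable (fun ω => b ω * F (W ω)) P) ∧
    ∫ ω, a ω * F (W ω) ∂P = ∫ ω, b ω * F (W ω) ∂P

def wmap {Ω E : Type*} [MeasurableSpace Ω] [MeasurableSpace E] (P : Measure Ω) (W : Ω → E)
    (a : Ω → ℝ) : Measure E := (P.withDensity (fun ω => ENNReal.ofReal (a ω))).map W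

section
variable {Ω E G : Type*} [MeasurableSpace Ω] [MeasurableSpace E] [MeasurableSpace G]
  {P : Measure Ω}

lemma wmap_int {W : Ω → E} (hW : Measurable W) {a : Ω → ℝ} (ha : Measurable a) 
    (ha0 : ∀ᵐ ω ∂P, 0 ≤ a ω) {F : E → ℝ} (hF : Measurable F) :
    (Integrable F (wmap P W a) ↔ Integrable (fun ω => a ω * F (W ω)) P) ∧
    ∫ x, F x ∂(wmap P W a) = ∫ ω, a ω * F (W ω) ∂P := by
  have hm : Measurable (fun ω => ENNReal.ofReal (a ω)) := by fun_prop
  have hlt : ∀ᵐ ω ∂P, ENNReal.ofReal (a ω) < ⊤ := by simp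
  constructor
  · unfold wmap
    rw [integrable_map_measure hF.aestronglyMeasurable hW.aemeasurable,
      integrable_withDensity_iff hm hlt]
    apply integrable_congr
    filter_upwards [ha0] with ω h
    simp [ENNReal.toReal_ofReal h, mul_comm]
  · unfold wmap
    rw [integral_map hW.aemeasurable hF.aestronglyMeasurable,
      integral_withDensity_eq_integral_toReal_smul hm hlt]
    apply integral_congr_ae
    filter_upwards [ha0] with ω h
    simp [ENNReal.toReal_ofReal h]

lemma wmap_apply {W : Ω → E} (hW : Measurable W) {a : Ω → ℝ} (hai : Integrable a P)
    (ha0 : ∀ᵐ ω ∂P, 0 ≤ a ω) {B : Set E} (hB : MeasurableSet B) :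
    wmap P W a B = ENNReal.ofReal (∫ ω, a ω * B.indicator (fun _ => (1:ℝ)) (W ω) ∂P) := by
  unfold wmap
  rw [Measure.map_apply hW hB, withDensity_apply _ (hW hB),
    ← ofReal_integral_eq_lintegral_ofReal hai.integrableOn (ae_restrict_of_ae ha0),
    ← integral_indicator (hW hB)]
  congr 2
  ext ω
  by_cases h : W ω ∈ B <;> simp [Set.indicator, h]

lemma same_of_wmap {W : Ω → E} (hW : Measurable W) {a b : Ω → ℝ} (ha : Measurable a)
    (hb : Measurable b) (ha0 : ∀ᵐ ω ∂P, 0 ≤ a ω) (hb0 : ∀ᵐ ω ∂P, 0 ≤ b ω)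
    (h : wmap P W a = wmap P W b) : Same P W a b := by
  intro F hF
  obtain ⟨h1, h2⟩ := wmap_int hW ha ha0 hF
  obtain ⟨h3, h4⟩ := wmap_int hW hb hb0 hF
  rw [← h1, ← h2, ← h3, ← h4, h]; simp

lemma same_of_sets {W : Ω → E} (hW : Measurable W) {a b : Ω → ℝ} (ha : Measurable a)
    (hb : Measurable b) (hai : Integrable a P) (hbi : Integrable b P)
    (ha0 : ∀ᵐ ω ∂P, 0 ≤ a ω) (hb0 : ∀ᵐ ω ∂P, 0 ≤ b ω)
    (h : ∀ B : Set E, MeasurableSet B → ∫ ω, a ω * B.indicator (fun _ => (1:ℝ)) (W ω) ∂P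
      = ∫ ω, b ω * B.indicator (fun _ => (1:ℝ)) (W ω) ∂P) : Same P W a b := by
  apply same_of_wmap hW ha hb ha0 hb0
  ext B hB
  rw [wmap_apply hW hai ha0 hB, wmap_apply hW hbi hb0 hB, h B hB]

lemma same_of_rect {W : Ω → E} (hW : Measurable W) {V : Ω → G} (hV : Measurable V)
    {a b : Ω → ℝ} (ha : Measurable a)
    (hb : Measurable b) (hai : Integrable a P) (hbi : Integrable b P)
    (ha0 : ∀ᵐ ω ∂P, 0 ≤ a ω) (hb0 : ∀ᵐ ω ∂P, 0 ≤ b ω)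
    (h : ∀ (B : Set E) (C : Set G), MeasurableSet B → MeasurableSet C →
      ∫ ω, a ω * B.indicator (fun _ => (1:ℝ)) (W ω) * C.indicator (fun _ => (1:ℝ)) (V ω) ∂P
      = ∫ ω, b ω * B.indicator (fun _ => (1:ℝ)) (W ω) * C.indicator (fun _ => (1:ℝ)) (V ω) ∂P) :
    Same P (fun ω => (W ω, V ω)) a b := by
  have hWV : Measurable (fun ω => (W ω, V ω)) := hW.prodMk hV
  apply same_of_wmap hWV ha hb ha0 hb0
  have : IsFiniteMeasure (wmap P (fun ω => (W ω, V ω)) a) := 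
    ⟨by rw [wmap_apply hWV hai ha0 MeasurableSet.univ]; simp⟩
  apply Measure.ext_prod
  intro B C hB hC
  rw [wmap_apply hWV hai ha0 (hB.prod hC), wmap_apply hWV hbi hb0 (hB.prod hC)]
  have e : ∀ c : Ω → ℝ, (fun ω => c ω * (B ×ˢ C).indicator (fun _ => (1:ℝ)) (W ω, V ω)) =
    fun ω => c ω * B.indicator (fun _ => (1:ℝ)) (W ω) * C.indicator (fun _ => (1:ℝ)) (V ω) := by
    intro c; ext ω
    by_cases h1 : W ω ∈ B <;> by_cases h2 : V ω ∈ C <;> simp [Set.indicator, h1, h2]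
  rw [e, e, h B C hB hC]

lemma signed_same {W : Ω → E} (hW : Measurable W) {U V : Ω → ℝ} (hU : Measurable U)
    (hV : Measurable V) (hUi : Integrable U P) (hVi : Integrable V P)
    (h : ∀ B : Set E, MeasurableSet B → ∫ ω, U ω * B.indicator (fun _ => (1:ℝ)) (W ω) ∂P
      = ∫ ω, V ω * B.indicator (fun _ => (1:ℝ)) (W ω) ∂P)
    {F : E → ℝ} (hF : Measurable F) (h1 : Integrable (fun ω => U ω * F (W ω)) P)
    (h2 : Integrable (fun ω => V ω * F (W ω)) P) :
    ∫ ω, U ω * F (W ω) ∂P = ∫ ω, V ω * F (W ω) ∂P := by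
  set a : Ω → ℝ := fun ω => max (U ω) 0 + max (- V ω) 0 with hadef
  set b : Ω → ℝ := fun ω => max (V ω) 0 + max (- U ω) 0 with hbdef
  have hab : ∀ ω, a ω - b ω = U ω - V ω := by
    intro ω
    have e1 := max_zero_sub_eq_self (U ω)
    have e2 := max_zero_sub_eq_self (V ω)
    simp only [hadef, hbdef]
    linarith
  have ha : Measurable a := by fun_prop
  have hb : Measurable b := by fun_prop
  have hai : Integrable a P := hUi.pos_part.add hVi.neg_part
  have hbi : Integrable b P := hVi.pos_part.add hUi.neg_part
  have ha0 : ∀ ω, 0 ≤ a ω := fun ω => by positivity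
  have hb0 : ∀ ω, 0 ≤ b ω := fun ω => by positivity
  have key : ∀ F : E → ℝ, Measurable F → Integrable (fun ω => U ω * F (W ω)) P →
      Integrable (fun ω => V ω * F (W ω)) P → Integrable (fun ω => a ω * F (W ω)) P ∧
      Integrable (fun ω => b ω * F (W ω)) P ∧
      ∫ ω, a ω * F (W ω) ∂P - ∫ ω, b ω * F (W ω) ∂P
       = ∫ ω, U ω * F (W ω) ∂P - ∫ ω, V ω * F (W ω) ∂P := by
    intro F hF h1 h2
    have hFW : Measurable (fun ω => F (W ω)) := hF.comp hW
    have bd : ∀ c : Ω → ℝ, Measurable c → (∀ ω, 0 ≤ c ω) → (∀ ω, c ω ≤ |U ω| + |V ω|) →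
        Integrable (fun ω => c ω * F (W ω)) P := by
      intro c hc hc0 hcU
      refine (h1.norm.add h2.norm).mono' (hc.mul hFW).aestronglyMeasurable ?_
      refine Filter.Eventually.of_forall fun ω => ?_
      simp only [Pi.add_apply, norm_mul, Real.norm_eq_abs, abs_of_nonneg (hc0 ω)]
      rw [← add_mul]
      exact mul_le_mul_of_nonneg_right (hcU ω) (abs_nonneg _)
    have i1 := bd a ha ha0 (fun ω => add_le_add (max_le (le_abs_self _) (abs_nonneg _))
      (max_le (neg_le_abs _) (abs_nonneg _)))
    have i2 := bd b hb hb0 (fun ω => by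
      rw [add_comm |U ω|]
      exact add_le_add (max_le (le_abs_self _) (abs_nonneg _))
        (max_le (neg_le_abs _) (abs_nonneg _)))
    refine ⟨i1, i2, ?_⟩
    rw [← integral_sub i1 i2, ← integral_sub h1 h2]
    congr 1; ext ω
    rw [← sub_mul, ← sub_mul, hab]
  have hs : Same P W a b := by
    apply same_of_sets hW ha hb hai hbi (.of_forall ha0) (.of_forall hb0)
    intro B hB
    have hBm : Measurable (B.indicator (fun _ => (1:ℝ))) := measurable_const.indicator hB
    have bi : ∀ c : Ω → ℝ, Integrable c P → 
        Integrable (fun ω => c ω * B.indicator (fun _ => (1:ℝ)) (W ω)) P := by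
      intro c hc
      refine hc.mul_bdd (c := 1) (hBm.comp hW).aestronglyMeasurable (.of_forall fun ω => ?_)
      by_cases h : W ω ∈ B <;> simp [h]
    have := (key _ hBm (bi U hUi) (bi V hVi)).2.2
    rw [h B hB] at this
    linarith
  have := (key F hF h1 h2).2.2
  rw [(hs F hF).2] at this
  linarith

end

section
variable {Ω 𝓧 : Type*} [MeasurableSpace Ω] [MeasurableSpace 𝓧]
  {P : Measure Ω} [IsProbabilityMeasure P]

lemma ind_meas {A : Set Ω} (hA : MeasurableSet A) : Measurable (ind A) :=
  measurable_const.indicator hA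

lemma ind_nonneg (A : Set Ω) (ω : Ω) : 0 ≤ ind A ω := by
  unfold ind; by_cases h : ω ∈ A <;> simp [h]

lemma ind_le (A : Set Ω) (ω : Ω) : ind A ω ≤ 1 := by
  unfold ind; by_cases h : ω ∈ A <;> simp [h]

lemma int01 {f : Ω → ℝ} (hf : Measurable f) (h0 : ∀ᵐ ω ∂P, 0 ≤ f ω) (h1 : ∀ᵐ ω ∂P, f ω ≤ 1) :
    Integrable f P := by
  refine (integrable_const (1:ℝ)).mono' hf.aestronglyMeasurable ?_
  filter_upwards [h0, h1] with ω a b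
  rwa [Real.norm_eq_abs, abs_of_nonneg a]

lemma int_mul01 {f g : Ω → ℝ} (hf : Integrable f P) (hg : Measurable g) (h0 : ∀ ω, 0 ≤ g ω)
    (h1 : ∀ ω, g ω ≤ 1) : Integrable (fun ω => g ω * f ω) P := by
  refine hf.bdd_mul (c := 1) hg.aestronglyMeasurable (.of_forall fun ω => ?_)
  rw [Real.norm_eq_abs, abs_of_nonneg (h0 ω)]; exact h1 ω

lemma ind_bdd {E : Type*} (B : Set E) : ∃ C : ℝ, ∀ x, |B.indicator (fun _ => (1:ℝ)) x| ≤ C :=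
  ⟨1, fun x => by by_cases h : x ∈ B <;> simp [h]⟩

lemma mar_same {X : Ω → 𝓧} (hX : Measurable X) {Y0 Y2 D1 D2 S : Ω → ℝ}
    (hY0 : Measurable Y0) (hY2 : Measurable Y2)
    (hD1 : Measurable D1) (hD2 : Measurable D2) (hS : Measurable S)
    (hSv : ∀ ω, S ω = 0 ∨ S ω = 1) {q : ℝ → 𝓧 → ℝ} (hMAR : MAR P X D1 D2 S Y0 Y2 q)
    {b : ℝ} (hb : b ∈ ({0, 1} : Set ℝ)) {φ : 𝓧 → ℝ} (hφ : Measurable φ)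
    (hφv : ∀ x, 0 < φ x ∧ φ x ≤ 1) (hφq : ∀ᵐ ω ∂P, φ (X ω) = q b (X ω)) :
    Same P (fun ω => ((D1 ω, Y2 ω - Y0 ω), X ω))
      (fun ω => ind (evD2 D2 b) ω * S ω / φ (X ω)) (ind (evD2 D2 b)) := by
  obtain ⟨h1, h2, h3⟩ := hMAR
  have hq := (h1 b hb).1
  have hA : MeasurableSet (evD2 D2 b) := hD2 (measurableSet_singleton b)
  have hi := ind_meas hA
  have hqX : Measurable (fun ω => q b (X ω)) := hq.comp hX
  have S0 : ∀ ω, 0 ≤ S ω := fun ω => by rcases hSv ω with h | h <;> simp [h]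
  have S1 : ∀ ω, S ω ≤ 1 := fun ω => by rcases hSv ω with h | h <;> simp [h]
  have m1 : Measurable (fun ω => ind (evD2 D2 b) ω * S ω) := hi.mul hS
  have m2 : Measurable (fun ω => ind (evD2 D2 b) ω * q b (X ω)) := hi.mul hqX
  have p1 : ∀ᵐ ω ∂P, 0 ≤ ind (evD2 D2 b) ω * S ω :=
    .of_forall fun ω => mul_nonneg (ind_nonneg _ _) (S0 ω)
  have p2 : ∀ᵐ ω ∂P, 0 ≤ ind (evD2 D2 b) ω * q b (X ω) := by
    filter_upwards [h2 b hb] with ω h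
    exact mul_nonneg (ind_nonneg _ _) h.1.le
  have key : Same P (fun ω => ((D1 ω, Y2 ω - Y0 ω), X ω))
      (fun ω => ind (evD2 D2 b) ω * S ω) (fun ω => ind (evD2 D2 b) ω * q b (X ω)) := by
    refine same_of_rect (hD1.prodMk (hY2.sub hY0)) hX m1 m2 ?_ ?_ p1 p2 ?_
    · exact int01 m1 p1 (.of_forall fun ω => mul_le_one₀ (ind_le _ _) (S0 ω) (S1 ω))
    · refine int01 m2 p2 ?_
      filter_upwards [h2 b hb] with ω h
      exact mul_le_one₀ (ind_le _ _) h.1.le h.2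
    · intro B C hB hC
      exact h3 b hb _ (measurable_const.indicator hB) (ind_bdd B) _
        (measurable_const.indicator hC) (ind_bdd C)
  intro F hF
  have k := key (fun x => F x / φ x.2) (hF.div (hφ.comp measurable_snd))
  have e1 : (fun ω => ind (evD2 D2 b) ω * S ω * (F ((D1 ω, Y2 ω - Y0 ω), X ω) / φ (X ω)))
      = fun ω => ind (evD2 D2 b) ω * S ω / φ (X ω) * F ((D1 ω, Y2 ω - Y0 ω), X ω) := by
    ext ω; ring
  have e2 : (fun ω => ind (evD2 D2 b) ω * q b (X ω) * (F ((D1 ω, Y2 ω - Y0 ω), X ω) / φ (X ω)))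
      =ᵐ[P] fun ω => ind (evD2 D2 b) ω * F ((D1 ω, Y2 ω - Y0 ω), X ω) := by
    filter_upwards [hφq] with ω h
    have := (hφv (X ω)).1.ne'
    rw [← h]; field_simp
  simp only at k
  rw [integrable_congr e2, integral_congr_ae e2, e1] at k
  exact k

lemma cm_same {X : Ω → 𝓧} (hX : Measurable X) {A C : Set Ω} (hA : MeasurableSet A)
    (hC : MeasurableSet C) {g : 𝓧 → ℝ} (hg : Measurable g)
    (hgv : ∀ x, 0 < g x ∧ g x < 1) (h : IsCondMeanGiven P X A (ind C) g) :
    Same P X (fun ω => ind A ω * ind C ω) (fun ω => ind A ω * g (X ω)) := by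
  have m1 : Measurable (fun ω => ind A ω * ind C ω) := (ind_meas hA).mul (ind_meas hC)
  have m2 : Measurable (fun ω => ind A ω * g (X ω)) := (ind_meas hA).mul (hg.comp hX)
  have p1 : ∀ᵐ ω ∂P, 0 ≤ ind A ω * ind C ω :=
    .of_forall fun ω => mul_nonneg (ind_nonneg _ _) (ind_nonneg _ _)
  have p2 : ∀ᵐ ω ∂P, 0 ≤ ind A ω * g (X ω) :=
    .of_forall fun ω => mul_nonneg (ind_nonneg _ _) (hgv _).1.le
  refine same_of_sets hX m1 m2 ?_ ?_ p1 p2 ?_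
  · exact int01 m1 p1 (.of_forall fun ω => mul_le_one₀ (ind_le _ _) (ind_nonneg _ _) (ind_le _ _))
  · exact int01 m2 p2 (.of_forall fun ω => mul_le_one₀ (ind_le _ _) (hgv _).1.le (hgv _).2.le)
  · intro B hB
    exact h.2 _ (measurable_const.indicator hB) (ind_bdd B)

lemma ind_evD (D1 D2 : Ω → ℝ) (d : ℝ × ℝ) (ω : Ω) :
    ind (evD D1 D2 d) ω = ind (evD2 D2 d.2) ω * ind {ω | D1 ω = d.1} ω := by
  unfold ind evD evD2
  by_cases h1 : D1 ω = d.1 <;> by_cases h2 : D2 ω = d.2 <;> simp [Set.indicator, h1, h2]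

lemma ps_same {X : Ω → 𝓧} (hX : Measurable X) {D1 D2 : Ω → ℝ}
    (hD1 : Measurable D1) (hD2 : Measurable D2) (d : ℝ × ℝ) {πc π2 : 𝓧 → ℝ}
    (hπcm : Measurable πc) (hπ2m : Measurable π2)
    (hπcv : ∀ x, 0 < πc x ∧ πc x < 1) (hπ2v : ∀ x, 0 < π2 x ∧ π2 x < 1)
    (hc : IsCondMeanGiven P X (evD2 D2 d.2) (ind {ω | D1 ω = d.1}) πc)
    (h2 : IsCondMeanGiven P X Set.univ (ind (evD2 D2 d.2)) π2) :
    Same P X (ind (evD D1 D2 d)) (fun ω => πc (X ω) * π2 (X ω)) := by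
  have hA : MeasurableSet (evD2 D2 d.2) := hD2 (measurableSet_singleton _)
  have hC : MeasurableSet {ω | D1 ω = d.1} := hD1 (measurableSet_singleton _)
  intro F hF
  have k1 := cm_same hX hA hC hπcm hπcv hc F hF
  have k2 := cm_same hX MeasurableSet.univ hA hπ2m hπ2v h2 (fun x => πc x * F x) (hπcm.mul hF)
  have e : ∀ ω, ind (Set.univ : Set Ω) ω = 1 := fun ω => by simp [ind]
  simp only [e, one_mul] at k2
  have e1 : (fun ω => ind (evD2 D2 d.2) ω * (πc (X ω) * F (X ω)))
    = fun ω => ind (evD2 D2 d.2) ω * πc (X ω) * F (X ω) := by ext; ring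
  have e2 : (fun ω => π2 (X ω) * (πc (X ω) * F (X ω)))
    = fun ω => πc (X ω) * π2 (X ω) * F (X ω) := by ext; ring
  rw [e1, e2] at k2
  simp only [ind_evD]
  exact ⟨k1.1.trans k2.1, k1.2.trans k2.2⟩

lemma tr_int {X : Ω → 𝓧} (hX : Measurable X) {Z : Ω → ℝ} (hZ : Integrable Z P) {g : 𝓧 → ℝ}
    (h : IsCondMeanGiven P X Set.univ Z g) : Integrable (fun ω => g (X ω)) P := by
  obtain ⟨hg, h⟩ := h
  have e : ∀ ω, ind (Set.univ : Set Ω) ω = 1 := fun ω => by simp [ind]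
  simp only [e, one_mul] at h
  have hgX : Measurable (fun ω => g (X ω)) := hg.comp hX
  have hms : ∀ n : ℕ, MeasurableSet {ω | |g (X ω)| ≤ n} := fun n =>
    measurableSet_le hgX.abs measurable_const
  have cov : AECover P Filter.atTop (fun n : ℕ => {ω | |g (X ω)| ≤ n}) := by
    refine ⟨.of_forall fun ω => ?_, hms⟩
    obtain ⟨N, hN⟩ := exists_nat_ge |g (X ω)|
    filter_upwards [Filter.eventually_ge_atTop N] with n hn
    exact hN.trans (by exact_mod_cast hn)
  refine cov.integrable_of_integral_norm_bounded (∫ ω, ‖Z ω‖ ∂P) ?_ (.of_forall ?_)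
  · intro n
    refine Measure.integrableOn_of_bounded (M := n) (measure_ne_top _ _)
      hgX.aestronglyMeasurable ?_
    exact (ae_restrict_iff' (hms n)).2 (.of_forall fun ω h => h)
  · intro n
    set k : 𝓧 → ℝ := {x | |g x| ≤ n}.indicator
      (fun x => if 0 ≤ g x then (1:ℝ) else -1) with hk
    have kb : ∀ x, |k x| ≤ 1 := by
      intro x
      simp only [hk, Set.indicator]
      split_ifs <;> simp
    have km : Measurable k := by
      refine Measurable.indicator ?_ (measurableSet_le hg.abs measurable_const)
      exact Measurable.ite (measurableSet_le measurable_const hg) measurable_const measurable_const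
    have hh := h k km ⟨1, kb⟩
    have e2 : ∫ ω in {ω | |g (X ω)| ≤ n}, ‖g (X ω)‖ ∂P = ∫ ω, g (X ω) * k (X ω) ∂P := by
      rw [← integral_indicator (hms n)]
      congr 1; ext ω
      simp only [hk, Set.indicator, Set.mem_setOf_eq, Real.norm_eq_abs]
      split_ifs with h1 h2
      · simp [abs_of_nonneg h2]
      · simp [abs_of_neg (not_le.1 h2)]
      · simp
    rw [e2, ← hh]
    refine integral_mono (hZ.mul_bdd (c := 1) (km.comp hX).aestronglyMeasurable
      (.of_forall fun ω => kb _)) hZ.norm fun ω => ?_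
    calc Z ω * k (X ω) ≤ |Z ω * k (X ω)| := le_abs_self _
      _ = |Z ω| * |k (X ω)| := abs_mul _ _
      _ ≤ |Z ω| * 1 := mul_le_mul_of_nonneg_left (kb _) (abs_nonneg _)
      _ = ‖Z ω‖ := by simp

end

/-- Theorem 1, case 2: the robust estimand identifies the PDATT when the missing-data
and propensity-score models are correctly specified (the outcome models are arbitrary). -/
theorem statement_5
    [MeasurableSpace Ω] [m𝓧 : MeasurableSpace 𝓧]
    (P : Measure Ω) [IsProbabilityMeasure P]
    (X : Ω → 𝓧) (hX : Measurable X)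
    (Y0 Y2 D1 D2 S : Ω → ℝ)
    (hY0 : Measurable Y0) (hY2 : Measurable Y2)
    (hD1 : Measurable D1) (hD2 : Measurable D2) (hS : Measurable S)
    (hY0i : Integrable Y0 P) (hY2i : Integrable Y2 P)
    (hD1v : ∀ ω, D1 ω = 0 ∨ D1 ω = 1) (hD2v : ∀ ω, D2 ω = 0 ∨ D2 ω = 1)
    (hSv : ∀ ω, S ω = 0 ∨ S ω = 1)
    (Y0p Y2p : ℝ × ℝ → Ω → ℝ)
    (hY0p : ∀ e ∈ allPaths, Measurable (Y0p e) ∧ Integrable (Y0p e) P)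
    (hY2p : ∀ e ∈ allPaths, Measurable (Y2p e) ∧ Integrable (Y2p e) P)
    (hcons0 : ∀ ω, Y0 ω = Y0p (D1 ω, D2 ω) ω)
    (hcons2 : ∀ ω, Y2 ω = Y2p (D1 ω, D2 ω) ω)
    (d : ℝ × ℝ) (hd : d ∈ threePaths)
    (hDIDd : DID P X D1 D2 Y0p Y2p d) (hDIDd' : DID P X D1 D2 Y0p Y2p (0, 0))
    (q : ℝ → 𝓧 → ℝ) (hMAR : MAR P X D1 D2 S Y0 Y2 q)
    (pd pd' : 𝓧 → ℝ)
    (hpd : IsCondMeanGiven P X Set.univ (ind (evD D1 D2 d)) pd)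
    (hpd' : IsCondMeanGiven P X Set.univ (ind (evD D1 D2 (0, 0))) pd')
    (hpdpos : ∀ᵐ ω ∂P, 0 < pd (X ω)) (hpd'pos : ∀ᵐ ω ∂P, 0 < pd' (X ω))
    (μd μd' πc πc' π2 π0 φ2 φ0 : 𝓧 → ℝ)
    (hμdm : Measurable μd) (hμd'm : Measurable μd')
    (hμdi : Integrable (fun ω => μd (X ω)) P) (hμd'i : Integrable (fun ω => μd' (X ω)) P)
    (hπcm : Measurable πc) (hπc'm : Measurable πc')
    (hπ2m : Measurable π2) (hπ0m : Measurable π0)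
    (hπcv : ∀ x, 0 < πc x ∧ πc x < 1) (hπc'v : ∀ x, 0 < πc' x ∧ πc' x < 1)
    (hπ2v : ∀ x, 0 < π2 x ∧ π2 x < 1) (hπ0v : ∀ x, 0 < π0 x ∧ π0 x < 1)
    (hφ2m : Measurable φ2) (hφ0m : Measurable φ0)
    (hφ2v : ∀ x, 0 < φ2 x ∧ φ2 x ≤ 1) (hφ0v : ∀ x, 0 < φ0 x ∧ φ0 x ≤ 1)
    (hn1i : Integrable (n1 X D1 D2 S φ2 d) P)
    (hn1pos : 0 < ∫ ω, n1 X D1 D2 S φ2 d ω ∂P)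
    (hn2i : Integrable (n2 X D1 D2 S φ0 πc πc' π2 π0) P)
    (hn2pos : 0 < ∫ ω, n2 X D1 D2 S φ0 πc πc' π2 π0 ω ∂P)
    (hn3i : Integrable (n3 X D2 πc d.2) P)
    (hn3pos : 0 < ∫ ω, n3 X D2 πc d.2 ω ∂P)
    (hn4i : Integrable (n4 X D2 S φ2 πc d.2) P)
    (hn4pos : 0 < ∫ ω, n4 X D2 S φ2 πc d.2 ω ∂P)
    (hint1 : Integrable (fun ω =>
        (n1 X D1 D2 S φ2 d ω / ∫ ω', n1 X D1 D2 S φ2 d ω' ∂P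
          - n2 X D1 D2 S φ0 πc πc' π2 π0 ω / ∫ ω', n2 X D1 D2 S φ0 πc πc' π2 π0 ω' ∂P)
        * (Y2 ω - Y0 ω - μd' (X ω))) P)
    (hint2 : Integrable (fun ω =>
        (n3 X D2 πc d.2 ω / ∫ ω', n3 X D2 πc d.2 ω' ∂P
          - n4 X D2 S φ2 πc d.2 ω / ∫ ω', n4 X D2 S φ2 πc d.2 ω' ∂P)
        * (μd (X ω) - μd' (X ω))) P)
    (hφ2_corr : ∀ᵐ ω ∂P, φ2 (X ω) = q d.2 (X ω))
    (hφ0_corr : ∀ᵐ ω ∂P, φ0 (X ω) = q 0 (X ω))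
    (hπc_corr : IsCondMeanGiven P X (evD2 D2 d.2) (ind {ω | D1 ω = d.1}) πc)
    (hπ2_corr : IsCondMeanGiven P X Set.univ (ind (evD2 D2 d.2)) π2)
    (hπc'_corr : IsCondMeanGiven P X (evD2 D2 0) (ind {ω | D1 ω = 0}) πc')
    (hπ0_corr : IsCondMeanGiven P X Set.univ (ind (evD2 D2 0)) π0)
    :
    tauR P X D1 D2 S Y0 Y2 d μd μd' πc πc' π2 π0 φ2 φ0 = tau P D1 D2 Y2p d := by
  have hd' : (d = (1,1) ∨ d = (0,1) ∨ d = (1,0)) := hd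
  have hne : d ≠ (0,0) := by rcases hd' with h | h | h <;> simp [h]
  have hd2 : d.2 ∈ ({0, 1} : Set ℝ) := by rcases hd' with h | h | h <;> simp [h]
  have hdall : d ∈ allPaths := by
    rcases hd' with h | h | h <;> simp [h, allPaths]
  have h0all : ((0:ℝ),(0:ℝ)) ∈ allPaths := by simp [allPaths]
  obtain ⟨na, tr, htr, htrd⟩ := hDIDd
  obtain ⟨-, tr', htr', htrd'⟩ := hDIDd'
  have MA := mar_same hX hY0 hY2 hD1 hD2 hS hSv hMAR hd2 hφ2m hφ2v hφ2_corr
  have MO := mar_same hX hY0 hY2 hD1 hD2 hS hSv hMAR (by simp) hφ0m hφ0v hφ0_corr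
  have PA := ps_same hX hD1 hD2 d hπcm hπ2m hπcv hπ2v hπc_corr hπ2_corr
  have PO := ps_same hX hD1 hD2 (0,0) hπc'm hπ0m hπc'v hπ0v hπc'_corr hπ0_corr
  have hAm : MeasurableSet (evD D1 D2 d) :=
    (hD1 (measurableSet_singleton _)).inter (hD2 (measurableSet_singleton _))
  have hOm : MeasurableSet (evD D1 D2 (0,0)) :=
    (hD1 (measurableSet_singleton _)).inter (hD2 (measurableSet_singleton _))
  have hA2m : MeasurableSet (evD2 D2 d.2) := hD2 (measurableSet_singleton _)
  have iAm := ind_meas hAm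
  have iOm := ind_meas hOm
  set c := ∫ ω, ind (evD D1 D2 d) ω ∂P with hc
  have hcP : c = (P (evD D1 D2 d)).toReal := by
    rw [hc]; unfold ind
    rw [integral_indicator_const _ hAm]; simp [Measure.real]
  have hΔi : Integrable (fun ω => Y2p (0,0) ω - Y0p (0,0) ω) P :=
    (hY2p _ h0all).2.sub (hY0p _ h0all).2
  have tri := tr_int hX hΔi htr
  have tri' := tr_int hX hΔi htr'
  have uni : ∀ ω, ind (Set.univ : Set Ω) ω = 1 := fun ω => by simp [ind]
  -- the propensity
  have p0 : ∀ x, 0 ≤ πc x * π2 x := fun x => mul_nonneg (hπcv x).1.le (hπ2v x).1.le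
  have p1 : ∀ x, πc x * π2 x ≤ 1 := fun x =>
    mul_le_one₀ (hπcv x).2.le (hπ2v x).1.le (hπ2v x).2.le
  have pm : Measurable (fun x => πc x * π2 x) := hπcm.mul hπ2m
  set r : 𝓧 → ℝ := fun x => πc x * π2 x / (πc' x * π0 x) with hr
  have rm : Measurable r := pm.div (hπc'm.mul hπ0m)
  have pr : ∀ x, πc' x * π0 x * r x = πc x * π2 x := by
    intro x
    have h1 := (hπc'v x).1.ne'
    have h2 := (hπ0v x).1.ne'
    rw [hr]; field_simp
  -- change of group
  have CG : ∀ g : 𝓧 → ℝ, Measurable g → Integrable (fun ω => g (X ω)) P →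
      Integrable (fun ω => ind (evD D1 D2 (0,0)) ω * (r (X ω) * g (X ω))) P ∧
      Integrable (fun ω => ind (evD D1 D2 d) ω * g (X ω)) P ∧
      ∫ ω, ind (evD D1 D2 (0,0)) ω * (r (X ω) * g (X ω)) ∂P
        = ∫ ω, πc (X ω) * π2 (X ω) * g (X ω) ∂P ∧
      ∫ ω, ind (evD D1 D2 d) ω * g (X ω) ∂P = ∫ ω, πc (X ω) * π2 (X ω) * g (X ω) ∂P := by
    intro g hg hgi
    have k1 := PO (fun x => r x * g x) (rm.mul hg)
    have k2 := PA g hg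
    have e : (fun ω => πc' (X ω) * π0 (X ω) * (r (X ω) * g (X ω)))
        = fun ω => πc (X ω) * π2 (X ω) * g (X ω) := by
      ext ω; rw [← mul_assoc, pr]
    have i : Integrable (fun ω => πc (X ω) * π2 (X ω) * g (X ω)) P :=
      int_mul01 hgi (pm.comp hX) (fun ω => p0 _) (fun ω => p1 _)
    simp only at k1
    rw [e] at k1
    exact ⟨k1.1.2 i, k2.1.2 i, k1.2, k2.2⟩
  -- n1
  have hJ : ∀ b : ℝ, Measurable (fun p : (ℝ × ℝ) × 𝓧 =>
      ({p : (ℝ × ℝ) × 𝓧 | p.1.1 = b}).indicator (fun _ => (1:ℝ)) p) := fun b =>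
    measurable_const.indicator
      ((measurable_fst.comp measurable_fst) (measurableSet_singleton b))
  have hJe : ∀ (b : ℝ) (ω : Ω), ({p : (ℝ × ℝ) × 𝓧 | p.1.1 = b}).indicator (fun _ => (1:ℝ))
      ((D1 ω, Y2 ω - Y0 ω), X ω) = ind {ω | D1 ω = b} ω := by
    intro b ω; simp [ind, Set.indicator]
  have N1 : ∀ F : (ℝ × ℝ) × 𝓧 → ℝ, Measurable F →
      (Integrable (fun ω => n1 X D1 D2 S φ2 d ω * F ((D1 ω, Y2 ω - Y0 ω), X ω)) P ↔
        Integrable (fun ω => ind (evD D1 D2 d) ω * F ((D1 ω, Y2 ω - Y0 ω), X ω)) P) ∧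
      ∫ ω, n1 X D1 D2 S φ2 d ω * F ((D1 ω, Y2 ω - Y0 ω), X ω) ∂P
       = ∫ ω, ind (evD D1 D2 d) ω * F ((D1 ω, Y2 ω - Y0 ω), X ω) ∂P := by
    intro F hF
    have k := MA _ ((hJ d.1).mul hF)
    simp only [Pi.mul_apply, hJe] at k
    have e1 : (fun ω => ind (evD2 D2 d.2) ω * S ω / φ2 (X ω) *
        (ind {ω | D1 ω = d.1} ω * F ((D1 ω, Y2 ω - Y0 ω), X ω))) =
        fun ω => n1 X D1 D2 S φ2 d ω * F ((D1 ω, Y2 ω - Y0 ω), X ω) := by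
      ext ω; simp only [n1, ind_evD]; ring
    have e2 : (fun ω => ind (evD2 D2 d.2) ω *
        (ind {ω | D1 ω = d.1} ω * F ((D1 ω, Y2 ω - Y0 ω), X ω))) =
        fun ω => ind (evD D1 D2 d) ω * F ((D1 ω, Y2 ω - Y0 ω), X ω) := by
      ext ω; simp only [ind_evD]; ring
    rwa [e1, e2] at k
  have N2 : ∀ F : (ℝ × ℝ) × 𝓧 → ℝ, Measurable F →
      (Integrable (fun ω => n2 X D1 D2 S φ0 πc πc' π2 π0 ω * F ((D1 ω, Y2 ω - Y0 ω), X ω)) P ↔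
        Integrable (fun ω => ind (evD D1 D2 (0,0)) ω *
          (r (X ω) * F ((D1 ω, Y2 ω - Y0 ω), X ω))) P) ∧
      ∫ ω, n2 X D1 D2 S φ0 πc πc' π2 π0 ω * F ((D1 ω, Y2 ω - Y0 ω), X ω) ∂P
       = ∫ ω, ind (evD D1 D2 (0,0)) ω * (r (X ω) * F ((D1 ω, Y2 ω - Y0 ω), X ω)) ∂P := by
    intro F hF
    have k := MO _ ((hJ 0).mul ((rm.comp measurable_snd).mul hF))
    simp only [Pi.mul_apply, hJe, Function.comp] at k
    have e1 : (fun ω => ind (evD2 D2 0) ω * S ω / φ0 (X ω) *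
        (ind {ω | D1 ω = 0} ω * (r (X ω) * F ((D1 ω, Y2 ω - Y0 ω), X ω)))) =
        fun ω => n2 X D1 D2 S φ0 πc πc' π2 π0 ω * F ((D1 ω, Y2 ω - Y0 ω), X ω) := by
      ext ω; simp only [n2, ind_evD, hr]; ring
    have e2 : (fun ω => ind (evD2 D2 0) ω *
        (ind {ω | D1 ω = 0} ω * (r (X ω) * F ((D1 ω, Y2 ω - Y0 ω), X ω)))) =
        fun ω => ind (evD D1 D2 (0,0)) ω * (r (X ω) * F ((D1 ω, Y2 ω - Y0 ω), X ω)) := by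
      ext ω; simp only [ind_evD]; ring
    rwa [e1, e2] at k
  have c1 : ∫ ω, n1 X D1 D2 S φ2 d ω ∂P = c := by
    have := (N1 (fun _ => 1) measurable_const).2
    simpa using this
  have c2 : ∫ ω, n2 X D1 D2 S φ0 πc πc' π2 π0 ω ∂P = c := by
    have h1 := (N2 (fun _ => 1) measurable_const).2
    have h2 := CG (fun _ => 1) measurable_const (integrable_const _)
    have h3 := h2.2.2.1.trans h2.2.2.2.symm
    rw [h3] at h1
    simpa using h1
  have hcpos : 0 < c := c1 ▸ hn1pos
  -- second term vanishes
  have c34 : ∫ ω, n4 X D2 S φ2 πc d.2 ω ∂P = ∫ ω, n3 X D2 πc d.2 ω ∂P := by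
    have k := (MA (fun p => πc p.2) (hπcm.comp measurable_snd)).2
    have e1 : n4 X D2 S φ2 πc d.2 =
        fun ω => ind (evD2 D2 d.2) ω * S ω / φ2 (X ω) * πc (X ω) := by
      ext ω; simp only [n4]; ring
    have e2 : n3 X D2 πc d.2 = fun ω => ind (evD2 D2 d.2) ω * πc (X ω) := by
      ext ω; simp only [n3]; ring
    rw [e1, e2]; exact k
  have T2 : ∫ ω, (n3 X D2 πc d.2 ω / ∫ ω', n3 X D2 πc d.2 ω' ∂P
        - n4 X D2 S φ2 πc d.2 ω / ∫ ω', n4 X D2 S φ2 πc d.2 ω' ∂P)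
      * (μd (X ω) - μd' (X ω)) ∂P = 0 := by
    have k := MA (fun p => πc p.2 * (μd p.2 - μd' p.2))
      ((hπcm.comp measurable_snd).mul ((hμdm.comp measurable_snd).sub (hμd'm.comp measurable_snd)))
    simp only at k
    have e1 : (fun ω => ind (evD2 D2 d.2) ω * S ω / φ2 (X ω) * (πc (X ω) * (μd (X ω) - μd' (X ω))))
        = fun ω => n4 X D2 S φ2 πc d.2 ω * (μd (X ω) - μd' (X ω)) := by
      ext ω; simp only [n4]; ring
    have e2 : (fun ω => ind (evD2 D2 d.2) ω * (πc (X ω) * (μd (X ω) - μd' (X ω))))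
        = fun ω => n3 X D2 πc d.2 ω * (μd (X ω) - μd' (X ω)) := by
      ext ω; simp only [n3]; ring
    rw [e1, e2] at k
    have i3 : Integrable (fun ω => n3 X D2 πc d.2 ω * (μd (X ω) - μd' (X ω))) P := by
      refine int_mul01 (hμdi.sub hμd'i) ((hπcm.comp hX).mul (ind_meas hA2m)) (fun ω => ?_)
        (fun ω => ?_)
      · exact mul_nonneg (hπcv _).1.le (ind_nonneg _ _)
      · exact mul_le_one₀ (hπcv _).2.le (ind_nonneg _ _) (ind_le _ _)
    have i4 := k.1.2 i3
    set c3 := ∫ ω', n3 X D2 πc d.2 ω' ∂P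
    rw [c34]
    have e : (fun ω => (n3 X D2 πc d.2 ω / c3 - n4 X D2 S φ2 πc d.2 ω / c3)
      * (μd (X ω) - μd' (X ω))) = fun ω => c3⁻¹ * (n3 X D2 πc d.2 ω * (μd (X ω) - μd' (X ω))
        - n4 X D2 S φ2 πc d.2 ω * (μd (X ω) - μd' (X ω))) := by
      ext ω; ring
    rw [e, integral_const_mul, integral_sub i3 i4, k.2]; simp
  -- first term
  have hdisj : ∀ ω, ind (evD D1 D2 d) ω * ind (evD D1 D2 (0,0)) ω = 0 := by
    intro ω
    unfold ind evD
    by_cases h1 : D1 ω = d.1 ∧ D2 ω = d.2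
    · have h2 : ¬ (D1 ω = (0:ℝ) ∧ D2 ω = (0:ℝ)) := by
        intro h3
        exact hne (Prod.ext (h1.1.symm.trans h3.1) (h1.2.symm.trans h3.2))
      simp [Set.indicator, h2]
    · simp [Set.indicator, h1]
  have hidem : ∀ A : Set Ω, ∀ ω, ind A ω * ind A ω = ind A ω := by
    intro A ω; by_cases h : ω ∈ A <;> simp [ind, h]
  have Fm : Measurable (fun p : (ℝ × ℝ) × 𝓧 => p.1.2 - μd' p.2) :=
    (measurable_snd.comp measurable_fst).sub (hμd'm.comp measurable_snd)
  have n1e := (N1 _ Fm).2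
  have n2k := N2 _ Fm
  simp only at n1e n2k
  rw [c1, c2] at hint1
  have I1 : Integrable (fun ω => n1 X D1 D2 S φ2 d ω * (Y2 ω - Y0 ω - μd' (X ω))) P := by
    have := (int_mul01 hint1 iAm (ind_nonneg _) (ind_le _)).const_mul c
    refine this.congr (.of_forall fun ω => ?_)
    have a1 := hdisj ω
    have a2 := hidem (evD D1 D2 d) ω
    simp only [n1, n2]
    field_simp
    linear_combination (S ω / φ2 (X ω) * (Y2 ω - Y0 ω - μd' (X ω))) * a2
      - (S ω / φ0 (X ω) * (πc (X ω) * π2 (X ω) / (πc' (X ω) * π0 (X ω)))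
          * (Y2 ω - Y0 ω - μd' (X ω))) * a1
  have I2 : Integrable (fun ω => n2 X D1 D2 S φ0 πc πc' π2 π0 ω
      * (Y2 ω - Y0 ω - μd' (X ω))) P := by
    have e : (fun ω => n2 X D1 D2 S φ0 πc πc' π2 π0 ω * (Y2 ω - Y0 ω - μd' (X ω)))
      = fun ω => n1 X D1 D2 S φ2 d ω * (Y2 ω - Y0 ω - μd' (X ω))
        - c * ((n1 X D1 D2 S φ2 d ω / c - n2 X D1 D2 S φ0 πc πc' π2 π0 ω / c)
        * (Y2 ω - Y0 ω - μd' (X ω))) := by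
      ext ω; field_simp; ring
    rw [e]
    exact I1.sub (hint1.const_mul c)
  have T1 : ∫ ω, (n1 X D1 D2 S φ2 d ω / c - n2 X D1 D2 S φ0 πc πc' π2 π0 ω / c)
        * (Y2 ω - Y0 ω - μd' (X ω)) ∂P
      = c⁻¹ * (∫ ω, n1 X D1 D2 S φ2 d ω * (Y2 ω - Y0 ω - μd' (X ω)) ∂P
        - ∫ ω, n2 X D1 D2 S φ0 πc πc' π2 π0 ω * (Y2 ω - Y0 ω - μd' (X ω)) ∂P) := by
    rw [← integral_sub I1 I2, ← integral_const_mul]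
    congr 1; ext ω; ring
  -- control arm
  have G1 := CG μd' hμd'm hμd'i
  have G2 := CG tr' htr'.1 tri'
  have G3 := CG tr htr.1 tri
  have J := n2k.1.1 I2
  have JY : Integrable (fun ω => ind (evD D1 D2 (0,0)) ω * (Y2 ω - Y0 ω) * r (X ω)) P := by
    refine (J.add G1.1).congr (.of_forall fun ω => ?_)
    simp only [Pi.add_apply]; ring
  have Jt : Integrable (fun ω => ind (evD D1 D2 (0,0)) ω * tr' (X ω) * r (X ω)) P := by
    refine G2.1.congr (.of_forall fun ω => ?_)
    simp only; ring
  have obs : ∀ (e : ℝ × ℝ) ω, ind (evD D1 D2 e) ω * (Y2 ω - Y0 ω)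
      = ind (evD D1 D2 e) ω * (Y2p e ω - Y0p e ω) := by
    intro e ω
    by_cases h : ω ∈ evD D1 D2 e
    · have : (D1 ω, D2 ω) = e := Prod.ext h.1 h.2
      rw [hcons0, hcons2, this]
    · simp [ind, h]
  have ctl : ∫ ω, ind (evD D1 D2 (0,0)) ω * (Y2 ω - Y0 ω) * r (X ω) ∂P
      = ∫ ω, ind (evD D1 D2 (0,0)) ω * tr' (X ω) * r (X ω) ∂P := by
    refine signed_same hX (iOm.mul (hY2.sub hY0)) (iOm.mul (htr'.1.comp hX))
      (int_mul01 (hY2i.sub hY0i) iOm (ind_nonneg _) (ind_le _))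
      (int_mul01 tri' iOm (ind_nonneg _) (ind_le _)) ?_ rm JY Jt
    intro B hB
    have := htrd'.2 _ (measurable_const.indicator hB) (ind_bdd B)
    simp only [Pi.mul_apply, Pi.sub_apply, Function.comp, obs]
    exact this
  have E2 : ∫ ω, n2 X D1 D2 S φ0 πc πc' π2 π0 ω * (Y2 ω - Y0 ω - μd' (X ω)) ∂P
      = ∫ ω, ind (evD D1 D2 d) ω * tr (X ω) ∂P - ∫ ω, ind (evD D1 D2 d) ω * μd' (X ω) ∂P := by
    have e : (fun ω => ind (evD D1 D2 (0,0)) ω * (r (X ω) * (Y2 ω - Y0 ω - μd' (X ω))))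
      = fun ω => ind (evD D1 D2 (0,0)) ω * (Y2 ω - Y0 ω) * r (X ω)
        - ind (evD D1 D2 (0,0)) ω * (r (X ω) * μd' (X ω)) := by ext ω; ring
    have e' : (fun ω => ind (evD D1 D2 (0,0)) ω * tr' (X ω) * r (X ω))
      = fun ω => ind (evD D1 D2 (0,0)) ω * (r (X ω) * tr' (X ω)) := by ext ω; ring
    rw [n2k.2, e, integral_sub JY G1.1, ctl, e', G1.2.2.1, G1.2.2.2, G2.2.2.1, G3.2.2.2]
    congr 1
    have pb : ∃ C : ℝ, ∀ x, |πc x * π2 x| ≤ C :=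
      ⟨1, fun x => by rw [abs_of_nonneg (p0 x)]; exact p1 x⟩
    have k1 := htr.2 _ pm pb
    have k2 := htr'.2 _ pm pb
    simp only [uni, one_mul] at k1 k2
    have k3 := k2.symm.trans k1
    simpa only [mul_comm (tr' _), mul_comm (tr _)] using k3
  have iAi : ∀ f : Ω → ℝ, Integrable f P → Integrable (fun ω => ind (evD D1 D2 d) ω * f ω) P :=
    fun f hf => int_mul01 hf iAm (ind_nonneg _) (ind_le _)
  have iA_sub : ∀ f g : Ω → ℝ, Integrable f P → Integrable g P →
      ∫ ω, ind (evD D1 D2 d) ω * (f ω - g ω) ∂P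
       = ∫ ω, ind (evD D1 D2 d) ω * f ω ∂P - ∫ ω, ind (evD D1 D2 d) ω * g ω ∂P := by
    intro f g hf hg
    rw [← integral_sub (iAi f hf) (iAi g hg)]
    simp only [mul_sub]
  have E1 : ∫ ω, n1 X D1 D2 S φ2 d ω * (Y2 ω - Y0 ω - μd' (X ω)) ∂P
      = ∫ ω, ind (evD D1 D2 d) ω * Y2p d ω ∂P - ∫ ω, ind (evD D1 D2 d) ω * Y0p d ω ∂P
        - ∫ ω, ind (evD D1 D2 d) ω * μd' (X ω) ∂P := by
    rw [n1e, iA_sub (fun ω => Y2 ω - Y0 ω) _ (hY2i.sub hY0i) hμd'i]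
    simp only [obs]
    rw [iA_sub _ _ (hY2p d hdall).2 (hY0p d hdall).2]
  have E3 := na (fun _ => 1) measurable_const ⟨1, fun _ => by simp⟩
  have E4 := htrd.2 (fun _ => 1) measurable_const ⟨1, fun _ => by simp⟩
  simp only [mul_one] at E3 E4
  rw [iA_sub _ _ (hY2p _ h0all).2 (hY0p _ h0all).2] at E4
  have E5 : ∫ ω in evD D1 D2 d, (Y2p d ω - Y2p (0, 0) ω) ∂P
      = ∫ ω, ind (evD D1 D2 d) ω * Y2p d ω ∂P - ∫ ω, ind (evD D1 D2 d) ω * Y2p (0,0) ω ∂P := by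
    rw [← iA_sub _ _ (hY2p d hdall).2 (hY2p _ h0all).2, ← integral_indicator hAm]
    congr 1; ext ω
    by_cases h : ω ∈ evD D1 D2 d <;> simp [ind, h]
  unfold tauR tau
  rw [T2, c1, c2, T1, E1, E2, E5, ← hcP, ← E4, E3]
  ring

end DIDMissing
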